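/- Let N be a positive integer, p a real number with 1 < p and 2p < N, and set Λ_{N,p} := (N(p−1)(N−2p)/p²)^p. If 0 < λ < Λ_{N,p}, then every C^∞ compactly supported function φ : ℝ^N → ℝ satisfies ∫_{ℝ^N} (|Δφ(x)|^p − λ|φ(x)|^p/|x|^{2p} + |∇φ(x)|^p) dx ≥ (1 − λ/Λ_{N,p}) ∫_{ℝ^N} |Δφ(x)|^p dx + ∫_{ℝ^N} |∇φ(x)|^p dx; in particular this quantity is nonnegative, so the norm ‖φ‖_λ := (∫_{ℝ^N} (|Δφ|^p − λ|φ|^p/|x|^{2p} + |∇φ|^p) dx)^{1/p} is well defined. -/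

import Mathlib

/-!
The gradient term is the same on both sides, so the claim is `lam / Λ` times the sharp Rellich
inequality `Λ ∫ |u|^p / |x|^{2p} ≤ ∫ |Δu|^p`.

For the latter put `r = |x|² + ε`, `k = 2 (p - 1 + c)` and integrate the divergence of the
compactly supported field `r^{1-p} |u|^{p-2} u ∇u + (k / p) r^{-p} |u|^p x`. Its cross term
`2 c r^{-p} |u|^{p-2} u (x · ∇u)` is absorbed by `(p - 1) r^{1-p} |u|^{p-2} |∇u|²` on completing
a square, and for `c = (p - 1) (N - 2p) / p` what remains is
`C ∫ (|u| / r)^p ≤ ∫ (|u| / r)^{p-1} |Δu|` with `C^p = Λ`. Young's inequality turns this into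
`Λ ∫ (|u| / r)^p ≤ ∫ |Δu|^p`, and `ε → 0` by Fatou's lemma, which also shows that
`|u|^p / |x|^{2p}` is integrable.

For `p < 2` the field need not be differentiable where `u` vanishes, so `|u|` is first replaced
by `√(u² + η)`; on the compact support of `u` all integrals depend continuously on `η ≥ 0`.
-/

open MeasureTheory

/-- The Laplacian of a function `φ : ℝ^N → ℝ`, as the sum of its pure second
partial derivatives in the coordinate directions. -/
noncomputable def lap {N : ℕ} (φ : EuclideanSpace ℝ (Fin N) → ℝ)
    (x : EuclideanSpace ℝ (Fin N)) : ℝ :=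
  ∑ i : Fin N, iteratedFDeriv ℝ 2 φ x ![EuclideanSpace.single i 1, EuclideanSpace.single i 1]

/-- The reciprocal `Λ_{N,p} = (N(p-1)(N-2p)/p²)^p` of the Rellich constant. -/
noncomputable def RellichLam (N : ℕ) (p : ℝ) : ℝ :=
  ((N : ℝ) * (p - 1) * ((N : ℝ) - 2 * p) / p ^ 2) ^ p

open Module Filter Topology InnerProductSpace Laplacian
open scoped Gradient RealInnerProductSpace

section Fatou

variable {α : Type*} [MeasurableSpace α] {μ : Measure α}

lemma integrable_and_integral_le_of_tendsto {f : ℕ → α → ℝ} {F : α → ℝ} {M : ℝ}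
    (hf : ∀ n, Integrable (f n) μ) (hf0 : ∀ n, 0 ≤ᵐ[μ] f n)
    (hlim : ∀ᵐ x ∂μ, Tendsto (fun n => f n x) atTop (𝓝 (F x))) (hM : ∀ n, ∫ x, f n x ∂μ ≤ M) :
    Integrable F μ ∧ ∫ x, F x ∂μ ≤ M := by
  have hFm : AEStronglyMeasurable F μ :=
    aestronglyMeasurable_of_tendsto_ae atTop (fun n => (hf n).aestronglyMeasurable) hlim
  have hF0 : 0 ≤ᵐ[μ] F := by
    filter_upwards [hlim, ae_all_iff.2 hf0] with x hx hx0 using ge_of_tendsto' hx hx0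
  have hfatou : ∫⁻ x, ENNReal.ofReal (F x) ∂μ ≤ ENNReal.ofReal M := calc
    ∫⁻ x, ENNReal.ofReal (F x) ∂μ
        = ∫⁻ x, liminf (fun n => ENNReal.ofReal (f n x)) atTop ∂μ :=
      lintegral_congr_ae (hlim.mono fun x hx => (ENNReal.tendsto_ofReal hx).liminf_eq.symm)
    _ ≤ liminf (fun n => ∫⁻ x, ENNReal.ofReal (f n x) ∂μ) atTop :=
      lintegral_liminf_le' fun n => (hf n).aestronglyMeasurable.aemeasurable.ennreal_ofReal
    _ ≤ ENNReal.ofReal M := by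
      refine liminf_le_of_frequently_le' (.of_forall fun n => ?_)
      rw [← ofReal_integral_eq_lintegral_ofReal (hf n) (hf0 n)]
      exact ENNReal.ofReal_le_ofReal (hM n)
  have hF : Integrable F μ :=
    ⟨hFm, (hasFiniteIntegral_iff_ofReal hF0).2 (hfatou.trans_lt ENNReal.ofReal_lt_top)⟩
  have hM0 : 0 ≤ M := (integral_nonneg_of_ae (hf0 0)).trans (hM 0)
  rw [← ofReal_integral_eq_lintegral_ofReal hF hF0, ENNReal.ofReal_le_ofReal_iff hM0] at hfatou
  exact ⟨hF, hfatou⟩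

end Fatou

section Divergence

variable {E F : Type*} [NormedAddCommGroup E] [NormedSpace ℝ E]
  [NormedAddCommGroup F] [NormedSpace ℝ F]

/-- The divergence of a vector field, as the trace of its derivative. -/
noncomputable def divergence (V : E → E) (x : E) : ℝ :=
  LinearMap.trace ℝ E (fderiv ℝ V x)

lemma divergence_add {V W : E → E} {x : E} (hV : DifferentiableAt ℝ V x)
    (hW : DifferentiableAt ℝ W x) :
    divergence (fun y => V y + W y) x = divergence V x + divergence W x := by
  simp [divergence, fderiv_fun_add hV hW]

lemma divergence_smul [FiniteDimensional ℝ E] {f : E → ℝ} {f' : E →L[ℝ] ℝ} {V : E → E} {x : E}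
    (hf : HasFDerivAt f f' x) (hV : DifferentiableAt ℝ V x) :
    divergence (fun y => f y • V y) x = f x * divergence V x + f' (V x) := by
  rw [divergence, (hf.fun_smul hV.hasFDerivAt).fderiv]
  simp [divergence]

lemma support_divergence_subset (V : E → E) : Function.support (divergence V) ⊆ tsupport V :=
  fun x hx => support_fderiv_subset ℝ fun h0 => hx (by simp [divergence, h0])

variable [FiniteDimensional ℝ E]

lemma divergence_id (x : E) : divergence (fun y : E => y) x = finrank ℝ E := by
  simp [divergence]

lemma continuous_divergence {V : E → E} (hV : ContDiff ℝ 1 V) : Continuous (divergence V) :=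
  (LinearMap.continuous_of_finiteDimensional
    (LinearMap.trace ℝ E ∘ₗ ContinuousLinearMap.coeLM ℝ)).comp (hV.continuous_fderiv one_ne_zero)

variable [MeasurableSpace E] [BorelSpace E] (μ : Measure E) [μ.IsAddHaarMeasure]

lemma integral_fderiv_eq_zero [CompleteSpace F] {f : E → F} (hf : ContDiff ℝ 1 f)
    (hfs : HasCompactSupport f) :
    ∫ x, fderiv ℝ f x ∂μ = 0 := by
  have hf' : Continuous (fderiv ℝ f) := hf.continuous_fderiv one_ne_zero
  have hint : Integrable (fderiv ℝ f) μ := hf'.integrable_of_hasCompactSupport (hfs.fderiv ℝ)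
  ext v
  rw [ContinuousLinearMap.integral_apply hint]
  simpa using integral_smul_fderiv_eq_neg_fderiv_smul_of_integrable (μ := μ) (𝕜 := ℝ)
    (f := fun _ => 1) (g := f) (v := v) (by simp) (by simpa using hint.apply_continuousLinearMap v)
    (by simpa using hf.continuous.integrable_of_hasCompactSupport hfs) (by simp)
    fun x _ => (hf.differentiable one_ne_zero).differentiableAt

lemma integral_divergence_eq_zero {V : E → E} (hV : ContDiff ℝ 1 V) (hVs : HasCompactSupport V) :
    ∫ x, divergence V x ∂μ = 0 := by
  have hint : Integrable (fderiv ℝ V) μ :=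
    (hV.continuous_fderiv one_ne_zero).integrable_of_hasCompactSupport (hVs.fderiv ℝ)
  have htrace := ContinuousLinearMap.integral_comp_comm
    (LinearMap.trace ℝ E ∘ₗ ContinuousLinearMap.coeLM ℝ).toContinuousLinearMap hint
  simpa [integral_fderiv_eq_zero μ hV hVs] using! htrace

end Divergence

section Laplacian

variable {E : Type*} [NormedAddCommGroup E] [InnerProductSpace ℝ E] [FiniteDimensional ℝ E]
  {u : E → ℝ}

lemma contDiff_gradient {n : WithTop ℕ∞} (hu : ContDiff ℝ (n + 1) u) : ContDiff ℝ n (∇ u) :=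
  (toDual ℝ E).symm.contDiff.comp (hu.fderiv_right le_rfl)

lemma tsupport_gradient_subset (u : E → ℝ) : tsupport (∇ u) ⊆ tsupport u := by
  refine (closure_mono fun x hx => ?_).trans (tsupport_fderiv_subset ℝ)
  exact fun h0 => hx (by simp [gradient, h0])

lemma divergence_gradient (hu : ContDiff ℝ 2 u) (x : E) : divergence (∇ u) x = (Δ u) x := by
  have hfd : HasFDerivAt (fderiv ℝ u) (fderiv ℝ (fderiv ℝ u) x) x :=
    ((hu.fderiv_right (m := 1) le_rfl).differentiable one_ne_zero x).hasFDerivAt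
  have hgrad : HasFDerivAt (∇ u) _ x :=
    ((toDual ℝ E).symm.toContinuousLinearEquiv.hasFDerivAt).comp x hfd
  rw [divergence, hgrad.fderiv, LinearMap.trace_eq_sum_inner _ (stdOrthonormalBasis ℝ E),
    laplacian_eq_iteratedFDeriv_stdOrthonormalBasis]
  refine Finset.sum_congr rfl fun i _ => ?_
  rw [iteratedFDeriv_two_apply, real_inner_comm]
  exact toDual_symm_apply

lemma continuous_laplacian (hu : ContDiff ℝ 2 u) : Continuous (Δ u) := by
  rw [← funext (divergence_gradient hu)]
  exact continuous_divergence (contDiff_gradient hu)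

lemma support_laplacian_subset (hu : ContDiff ℝ 2 u) : Function.support (Δ u) ⊆ tsupport u := by
  rw [← funext (divergence_gradient hu)]
  exact (support_divergence_subset _).trans (tsupport_gradient_subset u)

end Laplacian

section Pointwise

lemma quadratic_form_inner_nonneg {E : Type*} [NormedAddCommGroup E] [InnerProductSpace ℝ E]
    {a b d : ℝ} (hd : 0 < d) (hdisc : b ^ 2 ≤ a * d) (x y : E) :
    0 ≤ a * ‖x‖ ^ 2 + 2 * b * ⟪x, y⟫ + d * ‖y‖ ^ 2 := by
  refine nonneg_of_mul_nonneg_right ?_ hd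
  calc 0 ≤ ‖b • x + d • y‖ ^ 2 := sq_nonneg _
    _ = b ^ 2 * ‖x‖ ^ 2 + d * (2 * b * ⟪x, y⟫ + d * ‖y‖ ^ 2) := by
      rw [norm_add_sq_real, real_inner_smul_left, real_inner_smul_right, norm_smul, norm_smul,
        mul_pow, mul_pow, Real.norm_eq_abs, Real.norm_eq_abs, sq_abs, sq_abs]
      ring
    _ ≤ (a * d) * ‖x‖ ^ 2 + d * (2 * b * ⟪x, y⟫ + d * ‖y‖ ^ 2) := by gcongr
    _ = d * (a * ‖x‖ ^ 2 + 2 * b * ⟪x, y⟫ + d * ‖y‖ ^ 2) := by ring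

lemma mul_rpow_sub_one_mul_le {p a b : ℝ} (hp : 1 < p) (ha : 0 ≤ a) (hb : 0 ≤ b) :
    p * (a ^ (p - 1) * b) ≤ (p - 1) * a ^ p + b ^ p := by
  have hconj := Real.HolderConjugate.conjExponent hp
  have hyoung := Real.young_inequality_of_nonneg hb (Real.rpow_nonneg ha (p - 1)) hconj
  have hp1 : p - 1 ≠ 0 := by linarith
  rw [← Real.rpow_mul ha, Real.conjExponent, mul_div_cancel₀ _ hp1] at hyoung
  field_simp at hyoung
  linarith

end Pointwise

section RegularisedPower

/-- A smooth regularisation of `|t|`, for `η > 0`; it equals `|t|` for `η = 0`. -/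
noncomputable def regAbs (η t : ℝ) : ℝ := √(t ^ 2 + η)

/-- The regularisation of `|t| ^ (p - 2) * t`, which need not be differentiable at `0`. -/
noncomputable def regPow (p η t : ℝ) : ℝ := t * regAbs η t ^ (p - 2)

/-- The primitive of `regPow` that vanishes at `0`. -/
noncomputable def regPrim (p η t : ℝ) : ℝ := (regAbs η t ^ p - regAbs η 0 ^ p) / p

variable {p η : ℝ}

lemma regAbs_zero_left (t : ℝ) : regAbs 0 t = |t| := by simp [regAbs, Real.sqrt_sq_eq_abs]

lemma regPrim_zero_right (p η : ℝ) : regPrim p η 0 = 0 := by simp [regPrim]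

lemma regAbs_nonneg (η t : ℝ) : 0 ≤ regAbs η t := Real.sqrt_nonneg _

lemma regAbs_pos (hη : 0 < η) (t : ℝ) : 0 < regAbs η t := Real.sqrt_pos.2 (by positivity)

lemma abs_le_regAbs (hη : 0 ≤ η) (t : ℝ) : |t| ≤ regAbs η t := Real.abs_le_sqrt (by linarith)

lemma regAbs_sq (hη : 0 ≤ η) (t : ℝ) : regAbs η t ^ 2 = t ^ 2 + η := Real.sq_sqrt (by positivity)

lemma continuous_regAbs : Continuous fun z : ℝ × ℝ => regAbs z.1 z.2 := by
  unfold regAbs; fun_prop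

lemma contDiff_regAbs_rpow (hη : 0 < η) (a : ℝ) {n : WithTop ℕ∞} :
    ContDiff ℝ n fun t => regAbs η t ^ a :=
  ContDiff.rpow_const_of_ne (ContDiff.sqrt (by fun_prop) fun t => by positivity)
    fun t => (regAbs_pos hη t).ne'

lemma contDiff_regPow (hη : 0 < η) {n : WithTop ℕ∞} : ContDiff ℝ n (regPow p η) :=
  contDiff_id.mul (contDiff_regAbs_rpow hη _)

lemma contDiff_regPrim (hη : 0 < η) {n : WithTop ℕ∞} : ContDiff ℝ n (regPrim p η) :=
  ((contDiff_regAbs_rpow hη p).sub contDiff_const).div_const p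

lemma hasDerivAt_regAbs_rpow (hη : 0 < η) (a t : ℝ) :
    HasDerivAt (fun t => regAbs η t ^ a) (a * t * regAbs η t ^ (a - 2)) t := by
  have hs := regAbs_pos hη t
  have hsq : HasDerivAt (fun t : ℝ => t ^ 2 + η) (2 * t) t := by
    simpa using (hasDerivAt_pow 2 t).add_const η
  have hsqrt : HasDerivAt (regAbs η) (2 * t / (2 * regAbs η t)) t :=
    hsq.sqrt (by positivity)
  refine (hsqrt.rpow_const (Or.inl hs.ne')).congr_deriv ?_
  rw [show a - 1 = a - 2 + 1 by ring, Real.rpow_add_one hs.ne']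
  field_simp

lemma hasDerivAt_regPow (hη : 0 < η) (t : ℝ) :
    HasDerivAt (regPow p η) (regAbs η t ^ (p - 4) * ((p - 1) * t ^ 2 + η)) t := by
  refine ((hasDerivAt_id t).mul (hasDerivAt_regAbs_rpow hη (p - 2) t)).congr_deriv ?_
  have hpow : regAbs η t ^ (p - 2) = regAbs η t ^ (p - 4) * (t ^ 2 + η) := by
    rw [← regAbs_sq hη.le, ← Real.rpow_two, ← Real.rpow_add (regAbs_pos hη t)]
    ring_nf
  rw [hpow, show p - 2 - 2 = p - 4 by ring, id]
  ring

lemma hasDerivAt_regPrim (hp : p ≠ 0) (hη : 0 < η) (t : ℝ) :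
    HasDerivAt (regPrim p η) (regPow p η t) t := by
  refine (((hasDerivAt_regAbs_rpow hη p t).sub_const _).div_const p).congr_deriv ?_
  rw [regPow]
  field_simp

lemma regPrim_nonneg (hp : 0 ≤ p) (t : ℝ) : 0 ≤ regPrim p η t := by
  have hmono : regAbs η 0 ≤ regAbs η t := Real.sqrt_le_sqrt (by nlinarith)
  exact div_nonneg (sub_nonneg.2 (Real.rpow_le_rpow (regAbs_nonneg η 0) hmono hp)) hp

lemma abs_regPow_le (hη : 0 < η) (t : ℝ) : |regPow p η t| ≤ regAbs η t ^ (p - 1) := by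
  have hs := regAbs_pos hη t
  calc |regPow p η t| = |t| * regAbs η t ^ (p - 2) := by
        rw [regPow, abs_mul, abs_of_pos (Real.rpow_pos_of_pos hs _)]
    _ ≤ regAbs η t * regAbs η t ^ (p - 2) := by gcongr; exact abs_le_regAbs hη.le t
    _ = regAbs η t ^ (p - 1) := by
      rw [mul_comm, ← Real.rpow_add_one hs.ne']
      ring_nf

lemma sub_one_mul_regPow_sq_le (hη : 0 < η) (t : ℝ) :
    (p - 1) * regPow p η t ^ 2 ≤ regAbs η t ^ (p - 4) * ((p - 1) * t ^ 2 + η) * regAbs η t ^ p := by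
  have hs := regAbs_pos hη t
  have hpow : (regAbs η t ^ (p - 2)) ^ 2 = regAbs η t ^ (p - 4) * regAbs η t ^ p := by
    rw [← Real.rpow_two, ← Real.rpow_mul hs.le, ← Real.rpow_add hs]
    ring_nf
  rw [regPow, mul_pow, hpow]
  nlinarith [mul_pos (mul_pos (Real.rpow_pos_of_pos hs (p - 4)) (Real.rpow_pos_of_pos hs p)) hη]

end RegularisedPower

section Field

variable {E : Type*} [NormedAddCommGroup E] [InnerProductSpace ℝ E]
  {u : E → ℝ} {p c ε : ℝ} {g G : ℝ → ℝ}

lemma contDiff_normSq_add_rpow (hε : 0 < ε) (a : ℝ) {n : WithTop ℕ∞} :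
    ContDiff ℝ n fun x : E => (‖x‖ ^ 2 + ε) ^ a :=
  ContDiff.rpow_const_of_ne ((contDiff_norm_sq ℝ).add contDiff_const) fun x => by positivity

lemma hasFDerivAt_normSq_add_rpow_mul_comp {h : ℝ → ℝ} {h' a : ℝ} {x : E} (hε : 0 < ε)
    (hh : HasDerivAt h h' (u x)) (hu : DifferentiableAt ℝ u x) :
    HasFDerivAt (fun y => (‖y‖ ^ 2 + ε) ^ a * h (u y))
      (((‖x‖ ^ 2 + ε) ^ a * h') • fderiv ℝ u x +
        (2 * a * (‖x‖ ^ 2 + ε) ^ (a - 1) * h (u x)) • innerSL ℝ x) x := by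
  have hr : HasFDerivAt (fun y : E => (‖y‖ ^ 2 + ε) ^ a) _ x :=
    ((hasStrictFDerivAt_norm_sq x).hasFDerivAt.add_const ε).rpow_const (Or.inl (by positivity))
  refine (hr.mul (hh.comp_hasFDerivAt x hu.hasFDerivAt)).congr_fderiv ?_
  ext v
  simp only [Function.comp_apply, add_apply, smul_apply, smul_eq_mul, coe_innerSL_apply,
    nsmul_eq_mul, Nat.cast_ofNat]
  ring

variable [FiniteDimensional ℝ E]

/-- The field of the Rellich inequality, for `g t` and `G t` in the roles of `|t| ^ (p - 2) * t`
and its primitive `|t| ^ p / p`, and with `‖x‖ ^ 2` regularised by `ε`. The cross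
term of its divergence is `2 * c * (‖x‖ ^ 2 + ε) ^ (-p) * g (u x) * ⟪∇ u x, x⟫`. -/
noncomputable def rellichField (p c ε : ℝ) (g G : ℝ → ℝ) (u : E → ℝ) (x : E) : E :=
  ((‖x‖ ^ 2 + ε) ^ (1 - p) * g (u x)) • ∇ u x +
    (2 * (p - 1 + c) * ((‖x‖ ^ 2 + ε) ^ (-p) * G (u x))) • x

lemma contDiff_rellichField (hε : 0 < ε) (hg : ContDiff ℝ 1 g) (hG : ContDiff ℝ 1 G)
    (hu : ContDiff ℝ 2 u) : ContDiff ℝ 1 (rellichField p c ε g G u) := by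
  have hu1 : ContDiff ℝ 1 u := hu.of_le one_le_two
  exact (((contDiff_normSq_add_rpow hε _).mul (hg.comp hu1)).smul (contDiff_gradient hu)).add
    ((contDiff_const.mul ((contDiff_normSq_add_rpow hε _).mul (hG.comp hu1))).smul contDiff_id)

lemma tsupport_rellichField_subset (hG : G 0 = 0) :
    tsupport (rellichField p c ε g G u) ⊆ tsupport u := by
  refine closure_minimal (fun x hx => ?_) (isClosed_tsupport u)
  by_contra hxu
  have hgrad : ∇ u x = 0 :=
    image_eq_zero_of_notMem_tsupport fun h => hxu (tsupport_gradient_subset u h)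
  exact hx (by simp [rellichField, hgrad, image_eq_zero_of_notMem_tsupport hxu, hG])

lemma divergence_rellichField {g' : ℝ} {x : E} (hε : 0 < ε) (hg : HasDerivAt g g' (u x))
    (hG : HasDerivAt G (g (u x)) (u x)) (hu : ContDiff ℝ 2 u) :
    divergence (rellichField p c ε g G u) x =
      (‖x‖ ^ 2 + ε) ^ (1 - p) * (g (u x) * (Δ u) x + g' * ‖∇ u x‖ ^ 2) +
        2 * c * (‖x‖ ^ 2 + ε) ^ (-p) * g (u x) * ⟪∇ u x, x⟫ +
        2 * (p - 1 + c) * G (u x) * (finrank ℝ E * (‖x‖ ^ 2 + ε) ^ (-p) -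
          2 * p * ‖x‖ ^ 2 * (‖x‖ ^ 2 + ε) ^ (-p - 1)) := by
  have hux : DifferentiableAt ℝ u x := hu.differentiable two_ne_zero x
  have hgrad : DifferentiableAt ℝ (∇ u) x :=
    (contDiff_gradient (n := 1) hu).differentiable one_ne_zero x
  have hf := hasFDerivAt_normSq_add_rpow_mul_comp (a := 1 - p) hε hg hux
  have hF := (hasFDerivAt_normSq_add_rpow_mul_comp (a := -p) hε hG hux).const_mul
    (2 * (p - 1 + c))
  have hnorm : fderiv ℝ u x (∇ u x) = ‖∇ u x‖ ^ 2 := by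
    rw [← inner_gradient_left, real_inner_self_eq_norm_sq]
  unfold rellichField
  rw [divergence_add (hf.differentiableAt.fun_smul hgrad)
    (hF.differentiableAt.fun_smul differentiableAt_fun_id),
    divergence_smul hf hgrad, divergence_smul hF differentiableAt_fun_id, divergence_gradient hu,
    divergence_id]
  simp only [add_apply, smul_apply, smul_eq_mul, coe_innerSL_apply, hnorm,
    real_inner_comm (∇ u x) x, real_inner_self_eq_norm_sq, inner_gradient_left]
  ring_nf

/-- Completing the square in `∇ u` costs the term `c ^ 2 * κ`. -/
lemma le_divergence_rellichField {g' κ : ℝ} {x : E} (hε : 0 < ε) (hg : HasDerivAt g g' (u x))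
    (hG : HasDerivAt G (g (u x)) (u x)) (hu : ContDiff ℝ 2 u) (hp : 0 ≤ p) (hpc : 0 ≤ p - 1 + c)
    (hG0 : 0 ≤ G (u x)) (hκ : 0 < κ) (hgκ : g (u x) ^ 2 ≤ g' * κ) :
    (2 * (p - 1 + c) * (finrank ℝ E - 2 * p) * G (u x) - c ^ 2 * κ) * (‖x‖ ^ 2 + ε) ^ (-p) -
        (‖x‖ ^ 2 + ε) ^ (1 - p) * (|g (u x)| * |(Δ u) x|) ≤
      divergence (rellichField p c ε g G u) x := by
  rw [divergence_rellichField hε hg hG hu]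
  set r := ‖x‖ ^ 2 + ε with hr
  have hr0 : 0 < r := by positivity
  have hrp : r ^ (-p) = r ^ (-p - 1) * r := by
    rw [← Real.rpow_add_one hr0.ne']; ring_nf
  have hrp' : r ^ (1 - p) = r ^ (-p - 1) * r ^ 2 := by
    rw [← Real.rpow_two, ← Real.rpow_add hr0]; ring_nf
  have hsquare : 0 ≤ g' * (r ^ 2 * ‖∇ u x‖ ^ 2) + 2 * g (u x) * (r * c * ⟪∇ u x, x⟫) +
      κ * (c ^ 2 * ‖x‖ ^ 2) := by
    convert quadratic_form_inner_nonneg hκ hgκ (r • ∇ u x) (c • x) using 2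
    · simp only [norm_smul, mul_pow, Real.norm_eq_abs, sq_abs, real_inner_smul_left,
        real_inner_smul_right]
      ring
    · rw [norm_smul, mul_pow, Real.norm_eq_abs, sq_abs]
  have hlap : 0 ≤ r ^ 2 * (g (u x) * (Δ u) x + |g (u x)| * |(Δ u) x|) := by
    rw [← abs_mul]
    exact mul_nonneg (sq_nonneg r) (by linarith [neg_abs_le (g (u x) * (Δ u) x)])
  have hκε : 0 ≤ κ * c ^ 2 * ε := by positivity
  have hGε : 0 ≤ 2 * (p - 1 + c) * G (u x) * (2 * p) * ε := by positivity
  have hsum := mul_nonneg (Real.rpow_nonneg hr0.le (-p - 1))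
    (add_nonneg (add_nonneg hsquare hlap) (add_nonneg hκε hGε))
  rw [hrp, hrp', ← sub_nonneg]
  refine hsum.trans_eq ?_
  rw [show ε = r - ‖x‖ ^ 2 by rw [hr]; ring]
  ring

end Field

section Quotient

variable {E : Type*} [NormedAddCommGroup E] {u : E → ℝ} {p ε : ℝ}

lemma continuous_div_normSq_add_rpow (hp : 0 ≤ p) (hε : 0 < ε) (hu : Continuous u) :
    Continuous fun x => (|u x| / (‖x‖ ^ 2 + ε)) ^ p :=
  (hu.abs.div (by fun_prop) fun x => by positivity).rpow_const fun _ => .inr hp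

lemma tendsto_div_normSq_add_rpow (hp : 0 ≤ p) (t : ℝ) {x : E} (hx : x ≠ 0) :
    Tendsto (fun ε => (|t| / (‖x‖ ^ 2 + ε)) ^ p) (𝓝 0) (𝓝 (|t| ^ p / ‖x‖ ^ (2 * p))) := by
  have hx0 : ‖x‖ ^ 2 + 0 ≠ 0 := by simpa using hx
  have hcont : ContinuousAt (fun ε => (|t| / (‖x‖ ^ 2 + ε)) ^ p) 0 :=
    (continuousAt_const.div (by fun_prop) hx0).rpow_const (.inr hp)
  convert hcont.tendsto using 2
  rw [add_zero, Real.div_rpow (abs_nonneg t) (sq_nonneg _), ← Real.rpow_two,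
    ← Real.rpow_mul (norm_nonneg x)]

variable [MeasurableSpace E] [OpensMeasurableSpace E] (μ : Measure E)
  [IsFiniteMeasureOnCompacts μ]

lemma integrable_norm_rpow {F : Type*} [NormedAddCommGroup F] {v : E → F} (hp : 0 < p)
    (hv : Continuous v) (hvs : HasCompactSupport v) : Integrable (fun x => ‖v x‖ ^ p) μ :=
  (hv.norm.rpow_const fun _ => .inr hp.le).integrable_of_hasCompactSupport
    (hvs.comp_left (g := fun y : F => ‖y‖ ^ p) (by simp [hp.ne']))

lemma integrable_div_normSq_add_rpow (hp : 0 < p) (hε : 0 < ε) (hu : Continuous u)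
    (hus : HasCompactSupport u) : Integrable (fun x => (|u x| / (‖x‖ ^ 2 + ε)) ^ p) μ :=
  (continuous_div_normSq_add_rpow hp.le hε hu).integrable_of_hasCompactSupport
    (hus.mono fun x hx h0 => hx (by simp [h0, hp.ne']))

end Quotient

section Rellich

/-- The base of the power `RellichLam N p`: the constant in
`rellichBase N p * ∫ |u| ^ p / ‖x‖ ^ (2 * p) ≤ ∫ (|u| / ‖x‖ ^ 2) ^ (p - 1) * |Δ u|`
in dimension `N`. -/
noncomputable def rellichBase (N : ℕ) (p : ℝ) : ℝ := N * (p - 1) * (N - 2 * p) / p ^ 2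

lemma rellichBase_nonneg {N : ℕ} {p : ℝ} (hp : 1 < p) (hpN : 2 * p ≤ N) : 0 ≤ rellichBase N p := by
  have hp1 : 0 ≤ p - 1 := by linarith
  have hpN' : 0 ≤ N - 2 * p := by linarith
  exact div_nonneg (mul_nonneg (mul_nonneg N.cast_nonneg hp1) hpN') (sq_nonneg p)

lemma RellichLam_pos {N : ℕ} {p : ℝ} (hp : 1 < p) (hpN : 2 * p < N) : 0 < RellichLam N p := by
  have hp1 : 0 < p - 1 := by linarith
  have hpN' : 0 < N - 2 * p := by linarith
  have hN : (0 : ℝ) < N := by linarith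
  have hp2 : 0 < p ^ 2 := by positivity
  exact Real.rpow_pos_of_pos (div_pos (mul_pos (mul_pos hN hp1) hpN') hp2) p

variable {E : Type*} [NormedAddCommGroup E] [InnerProductSpace ℝ E] [FiniteDimensional ℝ E]
  {u : E → ℝ} {p ε : ℝ}

/-- The regularised integrand of the inequality `rellichBase n p * ∫ (|u| / ‖x‖ ^ 2) ^ p ≤
∫ (|u| / ‖x‖ ^ 2) ^ (p - 1) * |Δ u|` in dimension `n`, right side subtracted from left. The term
with the factor `m` vanishes at `η = 0`, so that the value of `m` is immaterial. -/
noncomputable def rellichIntegrand (p ε m : ℝ) (u : E → ℝ) (η : ℝ) (x : E) : ℝ :=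
  rellichBase (finrank ℝ E) p * (regAbs η (u x) / (‖x‖ ^ 2 + ε)) ^ p -
    (regAbs η (u x) / (‖x‖ ^ 2 + ε)) ^ (p - 1) * |(Δ u) x| -
    m * (regAbs η 0 / (‖x‖ ^ 2 + ε)) ^ p

lemma continuous_uncurry_rellichIntegrand (hp : 1 < p) (hε : 0 < ε) (m : ℝ) (hu : ContDiff ℝ 2 u) :
    Continuous (rellichIntegrand p ε m u).uncurry := by
  have hr (x : E) : ‖x‖ ^ 2 + ε ≠ 0 := by positivity
  have hp0 : 0 ≤ p := by linarith
  have hp1 : 0 ≤ p - 1 := by linarith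
  have hquot {v : ℝ × E → ℝ} (hv : Continuous v) :
      Continuous fun z : ℝ × E => regAbs z.1 (v z) / (‖z.2‖ ^ 2 + ε) :=
    (continuous_regAbs.comp (continuous_fst.prodMk hv)).div (by fun_prop) fun z => hr z.2
  have hquot_u := hquot (hu.continuous.comp continuous_snd)
  exact ((continuous_const.mul (hquot_u.rpow_const fun _ => .inr hp0)).sub
    ((hquot_u.rpow_const fun _ => .inr hp1).mul
      ((continuous_laplacian hu).comp continuous_snd).abs)).sub
    (continuous_const.mul ((hquot continuous_const).rpow_const fun _ => .inr hp0))

lemma support_rellichIntegrand_zero_subset (hp : 1 < p) :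
    Function.support (rellichIntegrand p ε 0 u 0) ⊆ tsupport u := by
  have hp0 : p ≠ 0 := by linarith
  have hp1 : p - 1 ≠ 0 := by linarith
  refine fun x hx => subset_tsupport u fun h0 => hx ?_
  simp [rellichIntegrand, regAbs_zero_left, h0, hp0, hp1]

/-- The choice `c = (p - 1) * (n - 2 * p) / p` maximises
`2 * (p - 1 + c) * (n - 2 * p) / p - c ^ 2 / (p - 1)`, and the maximum is `rellichBase n p`. -/
lemma exists_rellichIntegrand_le_divergence (hp : 1 < p) (hpN : 2 * p ≤ finrank ℝ E) (hε : 0 < ε)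
    (hu : ContDiff ℝ 2 u) :
    ∃ c m : ℝ, ∀ η > 0, ∀ x, rellichIntegrand p ε m u η x ≤
      divergence (rellichField p c ε (regPow p η) (regPrim p η) u) x := by
  set n : ℝ := (finrank ℝ E : ℝ) with hn
  have hp0 : 0 < p := by linarith
  have hp1 : 0 < p - 1 := by linarith
  set c : ℝ := (p - 1) * (n - 2 * p) / p with hc
  have hc0 : 0 ≤ c := div_nonneg (mul_nonneg hp1.le (by linarith)) hp0.le
  refine ⟨c, 2 * (p - 1 + c) * (n - 2 * p) / p, fun η hη x => ?_⟩
  have hs := regAbs_pos hη (u x)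
  have hr : 0 < ‖x‖ ^ 2 + ε := by positivity
  have hκ : regPow p η (u x) ^ 2 ≤
      regAbs η (u x) ^ (p - 4) * ((p - 1) * u x ^ 2 + η) * (regAbs η (u x) ^ p / (p - 1)) := by
    rw [← mul_div_assoc, le_div_iff₀' hp1]
    exact sub_one_mul_regPow_sq_le hη (u x)
  refine le_trans ?_ (le_divergence_rellichField hε (hasDerivAt_regPow hη (u x))
    (hasDerivAt_regPrim hp0.ne' hη (u x)) hu hp0.le (add_nonneg hp1.le hc0)
    (regPrim_nonneg hp0.le (u x)) (by positivity) hκ)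
  have hconst : 2 * (p - 1 + c) * (n - 2 * p) * regPrim p η (u x) -
      c ^ 2 * (regAbs η (u x) ^ p / (p - 1)) =
      rellichBase (finrank ℝ E) p * regAbs η (u x) ^ p -
        2 * (p - 1 + c) * (n - 2 * p) / p * regAbs η 0 ^ p := by
    rw [regPrim, rellichBase, ← hn, hc]
    field_simp
    ring
  have hlap : (‖x‖ ^ 2 + ε) ^ (1 - p) * (|regPow p η (u x)| * |(Δ u) x|) ≤
      (‖x‖ ^ 2 + ε) ^ (1 - p) * (regAbs η (u x) ^ (p - 1) * |(Δ u) x|) := by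
    gcongr
    exact abs_regPow_le hη (u x)
  rw [rellichIntegrand, hconst, Real.div_rpow hs.le hr.le, Real.div_rpow hs.le hr.le,
    Real.div_rpow (regAbs_nonneg η 0) hr.le, div_eq_mul_inv _ ((‖x‖ ^ 2 + ε) ^ p),
    div_eq_mul_inv _ ((‖x‖ ^ 2 + ε) ^ p), div_eq_mul_inv, ← Real.rpow_neg hr.le,
    ← Real.rpow_neg hr.le, neg_sub]
  linarith

lemma RellichLam_mul_sub_le (hp : 1 < p) (hpN : 2 * p ≤ finrank ℝ E) (hε : 0 < ε) (x : E) :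
    RellichLam (finrank ℝ E) p * (|u x| / (‖x‖ ^ 2 + ε)) ^ p - |(Δ u) x| ^ p ≤
      p * rellichBase (finrank ℝ E) p ^ (p - 1) * rellichIntegrand p ε 0 u 0 x := by
  have hC : 0 ≤ rellichBase (finrank ℝ E) p := rellichBase_nonneg hp hpN
  have ht : 0 ≤ |u x| / (‖x‖ ^ 2 + ε) := by positivity
  have hyoung := mul_rpow_sub_one_mul_le hp (mul_nonneg hC ht) (abs_nonneg ((Δ u) x))
  have hLam : rellichBase (finrank ℝ E) p ^ p = RellichLam (finrank ℝ E) p := rfl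
  have hCp : RellichLam (finrank ℝ E) p =
      rellichBase (finrank ℝ E) p ^ (p - 1) * rellichBase (finrank ℝ E) p := by
    rw [← Real.rpow_add_one' hC (by linarith), sub_add_cancel, hLam]
  rw [Real.mul_rpow hC ht, Real.mul_rpow hC ht, hLam, hCp] at hyoung
  rw [rellichIntegrand, regAbs_zero_left, hCp]
  linarith

variable [MeasurableSpace E] [BorelSpace E] (μ : Measure E) [μ.IsAddHaarMeasure]

lemma exists_setIntegral_rellichIntegrand_nonpos (hp : 1 < p) (hpN : 2 * p ≤ finrank ℝ E)
    (hε : 0 < ε) (hu : ContDiff ℝ 2 u) (hus : HasCompactSupport u) :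
    ∃ m : ℝ, ∀ η > 0, ∫ x in tsupport u, rellichIntegrand p ε m u η x ∂μ ≤ 0 := by
  obtain ⟨c, m, hle⟩ := exists_rellichIntegrand_le_divergence hp hpN hε hu
  refine ⟨m, fun η hη => ?_⟩
  have hV : ContDiff ℝ 1 (rellichField p c ε (regPow p η) (regPrim p η) u) :=
    contDiff_rellichField hε (contDiff_regPow hη) (contDiff_regPrim hη) hu
  have hVsub : tsupport (rellichField p c ε (regPow p η) (regPrim p η) u) ⊆ tsupport u :=
    tsupport_rellichField_subset (regPrim_zero_right p η)
  have hVs : HasCompactSupport (rellichField p c ε (regPow p η) (regPrim p η) u) :=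
    hus.of_isClosed_subset (isClosed_tsupport _) hVsub
  have hcont : Continuous (rellichIntegrand p ε m u η) :=
    (continuous_uncurry_rellichIntegrand hp hε m hu).uncurry_left η
  calc ∫ x in tsupport u, rellichIntegrand p ε m u η x ∂μ
      ≤ ∫ x in tsupport u, divergence (rellichField p c ε (regPow p η) (regPrim p η) u) x ∂μ :=
        setIntegral_mono (hcont.continuousOn.integrableOn_compact hus)
          ((continuous_divergence hV).continuousOn.integrableOn_compact hus) (hle η hη)
    _ = ∫ x, divergence (rellichField p c ε (regPow p η) (regPrim p η) u) x ∂μ :=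
        setIntegral_eq_integral_of_forall_compl_eq_zero fun x hx =>
          Function.notMem_support.1 fun h => hx (hVsub (support_divergence_subset _ h))
    _ = 0 := integral_divergence_eq_zero μ hV hVs

lemma integral_rellichIntegrand_zero_nonpos (hp : 1 < p) (hpN : 2 * p ≤ finrank ℝ E)
    (hε : 0 < ε) (hu : ContDiff ℝ 2 u) (hus : HasCompactSupport u) :
    ∫ x, rellichIntegrand p ε 0 u 0 x ∂μ ≤ 0 := by
  obtain ⟨m, hm⟩ := exists_setIntegral_rellichIntegrand_nonpos μ hp hpN hε hu hus
  have hcont : Continuous fun η => ∫ x in tsupport u, rellichIntegrand p ε m u η x ∂μ :=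
    continuous_parametric_integral_of_continuous
      (continuous_uncurry_rellichIntegrand hp hε m hu) hus
  have hzero : rellichIntegrand p ε m u 0 = rellichIntegrand p ε 0 u 0 := by
    ext x
    simp [rellichIntegrand, regAbs_zero_left, Real.zero_rpow (by linarith : p ≠ 0)]
  rw [← setIntegral_eq_integral_of_forall_compl_eq_zero fun x hx =>
    Function.notMem_support.1 fun h => hx (support_rellichIntegrand_zero_subset hp h),
    ← hzero]
  exact le_of_tendsto (hcont.continuousWithinAt (s := Set.Ioi 0) (x := 0))
    (eventually_mem_nhdsWithin.mono hm)

lemma integrable_abs_laplacian_rpow (hp : 0 < p) (hu : ContDiff ℝ 2 u)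
    (hus : HasCompactSupport u) : Integrable (fun x => |(Δ u) x| ^ p) μ :=
  integrable_norm_rpow μ hp (continuous_laplacian hu) (hus.mono' (support_laplacian_subset hu))

lemma rellich_inequality_regularised (hp : 1 < p) (hpN : 2 * p ≤ finrank ℝ E) (hε : 0 < ε)
    (hu : ContDiff ℝ 2 u) (hus : HasCompactSupport u) :
    RellichLam (finrank ℝ E) p * ∫ x, (|u x| / (‖x‖ ^ 2 + ε)) ^ p ∂μ ≤
      ∫ x, |(Δ u) x| ^ p ∂μ := by
  have hp0 : 0 < p := by linarith
  have hquot := (integrable_div_normSq_add_rpow μ hp0 hε hu.continuous hus).const_mul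
    (RellichLam (finrank ℝ E) p)
  have hlap := integrable_abs_laplacian_rpow μ hp0 hu hus
  have hcont : Continuous (rellichIntegrand p ε 0 u 0) :=
    (continuous_uncurry_rellichIntegrand hp hε 0 hu).uncurry_left 0
  have hintegrand : Integrable (rellichIntegrand p ε 0 u 0) μ :=
    hcont.integrable_of_hasCompactSupport (hus.mono' (support_rellichIntegrand_zero_subset hp))
  have hcoeff : 0 ≤ p * rellichBase (finrank ℝ E) p ^ (p - 1) :=
    mul_nonneg hp0.le (Real.rpow_nonneg (rellichBase_nonneg hp hpN) _)
  rw [← sub_nonpos, ← integral_const_mul, ← integral_sub hquot hlap]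
  calc ∫ x, (RellichLam (finrank ℝ E) p * (|u x| / (‖x‖ ^ 2 + ε)) ^ p - |(Δ u) x| ^ p) ∂μ
      ≤ ∫ x, p * rellichBase (finrank ℝ E) p ^ (p - 1) * rellichIntegrand p ε 0 u 0 x ∂μ := by
          refine integral_mono (hquot.sub hlap) (hintegrand.const_mul _) fun x => ?_
          exact RellichLam_mul_sub_le hp hpN hε x
    _ = p * rellichBase (finrank ℝ E) p ^ (p - 1) * ∫ x, rellichIntegrand p ε 0 u 0 x ∂μ :=
        integral_const_mul _ _
    _ ≤ 0 := mul_nonpos_of_nonneg_of_nonpos hcoeff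
        (integral_rellichIntegrand_zero_nonpos μ hp hpN hε hu hus)

theorem rellich_inequality (hp : 1 < p) (hpN : 2 * p < finrank ℝ E) (hu : ContDiff ℝ 2 u)
    (hus : HasCompactSupport u) :
    Integrable (fun x => |u x| ^ p / ‖x‖ ^ (2 * p)) μ ∧
      RellichLam (finrank ℝ E) p * ∫ x, |u x| ^ p / ‖x‖ ^ (2 * p) ∂μ ≤ ∫ x, |(Δ u) x| ^ p ∂μ := by
  have hLam : 0 < RellichLam (finrank ℝ E) p := RellichLam_pos hp hpN
  have hp0 : 0 < p := by linarith
  have hdim : (0 : ℝ) < finrank ℝ E := by linarith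
  have : Nontrivial E := nontrivial_of_finrank_pos (Nat.cast_pos.1 hdim)
  have hne : ∀ᵐ x ∂μ, x ≠ 0 := Measure.ae_ne μ 0
  rw [← le_div_iff₀' hLam]
  refine integrable_and_integral_le_of_tendsto (μ := μ)
    (f := fun n x => (|u x| / (‖x‖ ^ 2 + 1 / ((n : ℝ) + 1))) ^ p) (fun n => ?_) (fun n => ?_)
    (hne.mono fun x hx => (tendsto_div_normSq_add_rpow hp0.le (u x) hx).comp
      tendsto_one_div_add_atTop_nhds_zero_nat) fun n => ?_
  · exact integrable_div_normSq_add_rpow μ hp0 (by positivity) hu.continuous hus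
  · exact .of_forall fun x => by positivity
  · rw [le_div_iff₀' hLam]
    exact rellich_inequality_regularised μ hp hpN.le (by positivity) hu hus

end Rellich

lemma lap_eq_laplacian {N : ℕ} (φ : EuclideanSpace ℝ (Fin N) → ℝ) : lap φ = Δ φ := by
  rw [laplacian_eq_iteratedFDeriv_orthonormalBasis φ (EuclideanSpace.basisFun (Fin N) ℝ)]
  ext x
  simp [lap]

theorem norm_lambda_lower_bound_general {E : Type*} [NormedAddCommGroup E] [InnerProductSpace ℝ E]
    [FiniteDimensional ℝ E] [MeasurableSpace E] [BorelSpace E] (μ : Measure E)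
    [μ.IsAddHaarMeasure] {p lam : ℝ} (hp : 1 < p) (hpN : 2 * p < finrank ℝ E) (hlam : 0 ≤ lam)
    {u : E → ℝ} (hu : ContDiff ℝ 2 u) (hus : HasCompactSupport u) :
    ∫ x, (|(Δ u) x| ^ p - lam * |u x| ^ p / ‖x‖ ^ (2 * p) + ‖fderiv ℝ u x‖ ^ p) ∂μ ≥
      (1 - lam / RellichLam (finrank ℝ E) p) * (∫ x, |(Δ u) x| ^ p ∂μ) +
        ∫ x, ‖fderiv ℝ u x‖ ^ p ∂μ := by
  have hp0 : 0 < p := by linarith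
  obtain ⟨hpot, hrellich⟩ := rellich_inequality μ hp hpN hu hus
  have hscaled : lam * ∫ x, |u x| ^ p / ‖x‖ ^ (2 * p) ∂μ ≤
      lam / RellichLam (finrank ℝ E) p * ∫ x, |(Δ u) x| ^ p ∂μ := by
    rw [div_mul_eq_mul_div, le_div_iff₀ (RellichLam_pos hp hpN), mul_assoc, mul_comm (∫ x, _ ∂μ)]
    exact mul_le_mul_of_nonneg_left hrellich hlam
  have hlap := integrable_abs_laplacian_rpow μ hp0 hu hus
  have hgrad := integrable_norm_rpow μ hp0 (hu.continuous_fderiv two_ne_zero) (hus.fderiv ℝ)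
  simp only [mul_div_assoc]
  have hsub : Integrable (fun x => |(Δ u) x| ^ p - lam * (|u x| ^ p / ‖x‖ ^ (2 * p))) μ :=
    hlap.sub (hpot.const_mul lam)
  rw [integral_add hsub hgrad, integral_sub hlap (hpot.const_mul lam), integral_const_mul,
    one_sub_mul]
  linarith

/-- For `0 < λ < Λ_{N,p}`, the quantity defining the norm `‖·‖_λ` is bounded below by
`(1 - λ/Λ_{N,p}) ∫ |Δφ|^p + ∫ |∇φ|^p`; in particular it is nonnegative. -/
theorem norm_lambda_lower_bound (N : ℕ) (hN : 0 < N) (p : ℝ) (hp : 1 < p)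
    (hpN : 2 * p < (N : ℝ)) (lam : ℝ) (hlam0 : 0 < lam) (hlam : lam < RellichLam N p)
    (φ : EuclideanSpace ℝ (Fin N) → ℝ) (hφ : ContDiff ℝ (⊤ : ℕ∞) φ)
    (hsupp : HasCompactSupport φ) :
    ∫ x : EuclideanSpace ℝ (Fin N),
        (|lap φ x| ^ p - lam * |φ x| ^ p / ‖x‖ ^ (2 * p) + ‖fderiv ℝ φ x‖ ^ p) ≥
      (1 - lam / RellichLam N p) * (∫ x : EuclideanSpace ℝ (Fin N), |lap φ x| ^ p) +
        ∫ x : EuclideanSpace ℝ (Fin N), ‖fderiv ℝ φ x‖ ^ p := by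
  simpa [lap_eq_laplacian] using norm_lambda_lower_bound_general volume hp (by simpa using hpN)
    hlam0.le (contDiff_infty.1 hφ 2) hsupp
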